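/- arXiv:0809.3476 — 2 statements merged into one kernel-verified Lean document; each statement's English description precedes it below -/
import Mathlib

section
/- For every n ≥ 1, ∑_{α : ⟨α⟩ = n} (−1)^{|α| + n} H̃(α) = C_n, the n-th Catalan number (1/(n+1))·binom(2n, n), where the sum is over all types α with ⟨α⟩ := ∑_{j≥2}(j−1)α_j = n and |α| := ∑_{j≥2} α_j. -/
/-- Equivalence of factorizations: generated by swapping two adjacent
commuting factors. -/
inductive FactEquiv {n : ℕ} : List (Equiv.Perm (Fin n)) → List (Equiv.Perm (Fin n)) → Prop
  | refl (l) : FactEquiv l l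
  | swap (l₁ l₂ : List (Equiv.Perm (Fin n))) (a b : Equiv.Perm (Fin n)) (h : a * b = b * a) :
      FactEquiv (l₁ ++ a :: b :: l₂) (l₁ ++ b :: a :: l₂)
  | trans {l₁ l₂ l₃} : FactEquiv l₁ l₂ → FactEquiv l₂ l₃ → FactEquiv l₁ l₃

/-- For a type `α`, the corresponding `n = 1 + ⟨α⟩ = 1 + ∑ (j−1) α j`. -/
def nOf (α : ℕ →₀ ℕ) : ℕ := 1 + α.sum fun j a => (j - 1) * a

/-- Minimal factorizations of the `nOf α`-cycle `(1 2 … n)` of type `α`. -/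
def FactOfType (α : ℕ →₀ ℕ) : Type :=
  {l : List (Equiv.Perm (Fin (nOf α))) //
    (∀ σ ∈ l, σ.IsCycle ∧ 2 ≤ σ.support.card) ∧ l.prod = finRotate (nOf α) ∧
    ∀ j, l.countP (fun σ => decide (σ.support.card = j)) = α j}

/-- `H̃ α` = number of inequivalent minimal factorizations of type `α`. -/
noncomputable def Htilde (α : ℕ →₀ ℕ) : ℕ :=
  Nat.card (Quot (fun l₁ l₂ : FactOfType α => FactEquiv l₁.1 l₂.1))

/-!
Equivalence classes of factorizations are Cartier–Foata traces. Counted with sign, the minimal ones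
invert the zeta function of the absolute order on permutations: grouping a pair of a permutation
`h ≤ g` and a minimal trace of `h⁻¹ * g` by the trace obtained from the cycles of `h` followed by
that trace turns the convolution into alternating sums over the sets of factors which can be moved
to the front. The signed count of `g` is therefore the Möbius function of the interval `[1, g]`.
Weisner's theorem, applied to the permutations fixing a point, gives a recursion for this Möbius
function. On a cycle, it is the recursion of the Catalan numbers with alternating signs.
-/

open Equiv Equiv.Perm
open scoped Finset
open Finset.HasAntidiagonal (antidiagonal)
open IncidenceAlgebra (mu mu_mul_zeta mu_self sum_Icc_mu_left sum_Icc_mu_right zeta zeta_mul_mu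
  zeta_of_le)

section Weisner

variable {β : Type*} [PartialOrder β] [LocallyFiniteOrder β] [DecidableEq β]

/- Weisner's theorem is the case of a lattice with `ρ x = x ⊓ b` and `S = Set.Iic b`. -/
theorem sum_mu_filter_eq_zero {R : Type*} [Ring R] {a c : β} {S : Set β} {ρ : β → β}
    (hρ : ∀ x y, y ≤ ρ x ↔ y ≤ x ∧ y ∈ S) (hc : c ∉ S) :
    ∑ x ∈ Finset.Icc a c with ρ x = a, mu R x c = 0 := by
  classical
  have indicator_eq (x : β) :
      (if ρ x = a then 1 else 0 : R) = ∑ y ∈ Finset.Icc a x with y ∈ S, mu R a y := by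
    have hIcc : Finset.Icc a (ρ x) = {y ∈ Finset.Icc a x | y ∈ S} := by
      ext y
      simp only [Finset.mem_Icc, Finset.mem_filter, hρ, and_assoc]
    rw [← hIcc, sum_Icc_mu_right]
    simp only [eq_comm]
  calc ∑ x ∈ Finset.Icc a c with ρ x = a, mu R x c
      = ∑ x ∈ Finset.Icc a c, (if ρ x = a then 1 else 0) * mu R x c := by
        simp only [Finset.sum_filter, ite_mul, one_mul, zero_mul]
    _ = ∑ x ∈ Finset.Icc a c, ∑ y ∈ Finset.Icc a x with y ∈ S, mu R a y * mu R x c := by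
        simp only [indicator_eq, Finset.sum_mul]
    _ = ∑ y ∈ Finset.Icc a c with y ∈ S, ∑ x ∈ Finset.Icc y c, mu R a y * mu R x c := by
        refine Finset.sum_comm' fun x y => ?_
        simp only [Finset.mem_Icc, Finset.mem_filter]
        constructor
        · rintro ⟨⟨-, hxc⟩, ⟨hay, hyx⟩, hy⟩
          exact ⟨⟨hyx, hxc⟩, ⟨hay, hyx.trans hxc⟩, hy⟩
        · rintro ⟨⟨hyx, hxc⟩, ⟨hay, -⟩, hy⟩
          exact ⟨⟨hay.trans hyx, hxc⟩, ⟨hay, hyx⟩, hy⟩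
    _ = 0 := by
        refine Finset.sum_eq_zero fun y hy => ?_
        have hyc : y ≠ c := fun h => hc (h ▸ (Finset.mem_filter.1 hy).2)
        rw [← Finset.mul_sum, sum_Icc_mu_left, if_neg hyc, mul_zero]

end Weisner

section TranslationInvariance

variable {G R : Type*} [Group G] [PartialOrder G]

open Classical in
/-- The translation invariant element of the incidence algebra of a group given by a function. -/
noncomputable def translationKernel [Zero R] (f : G → R) : IncidenceAlgebra R G where
  toFun x y := if x ≤ y then f (x⁻¹ * y) else 0
  eq_zero_of_not_le' _ _ h := if_neg h

lemma translationKernel_of_le [Zero R] {f : G → R} {x y : G} (h : x ≤ y) :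
    translationKernel f x y = f (x⁻¹ * y) :=
  if_pos h

variable [LocallyFiniteOrder G]

lemma sum_Icc_inv_mul [AddCommMonoid R]
    (hG : ∀ x y z : G, x ≤ y ∧ y ≤ z ↔ x ≤ z ∧ x⁻¹ * y ≤ x⁻¹ * z) {x z : G} (hxz : x ≤ z)
    (φ : G → R) : ∑ y ∈ Finset.Icc x z, φ (x⁻¹ * y) = ∑ h ∈ Finset.Icc 1 (x⁻¹ * z), φ h := by
  have one_le (y : G) (hxy : x ≤ y) : 1 ≤ x⁻¹ * y := by
    simpa using ((hG x x y).1 ⟨le_rfl, hxy⟩).2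
  refine Finset.sum_nbij' (x⁻¹ * ·) (x * ·) (fun y hy => ?_) (fun h hh => ?_) (by simp) (by simp)
    (by simp)
  · have hy' := Finset.mem_Icc.1 hy
    exact Finset.mem_Icc.2 ⟨one_le y hy'.1, ((hG x y z).1 hy').2⟩
  · exact Finset.mem_Icc.2 ((hG x _ z).2 ⟨hxz, by simpa using (Finset.mem_Icc.1 hh).2⟩)

variable [Ring R] [DecidableEq G]

theorem mu_eq_mu_one_inv_mul
    (hG : ∀ x y z : G, x ≤ y ∧ y ≤ z ↔ x ≤ z ∧ x⁻¹ * y ≤ x⁻¹ * z) {x z : G} (hxz : x ≤ z) :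
    mu R x z = mu R 1 (x⁻¹ * z) := by
  classical
  have hinv : (translationKernel (mu R (1 : G)) * zeta R : IncidenceAlgebra R G) = 1 := by
    ext x z hxz
    calc (translationKernel (mu R (1 : G)) * zeta R : IncidenceAlgebra R G) x z
        = ∑ y ∈ Finset.Icc x z, mu R 1 (x⁻¹ * y) := by
          refine Finset.sum_congr rfl fun y hy => ?_
          obtain ⟨hxy, hyz⟩ := Finset.mem_Icc.1 hy
          rw [translationKernel_of_le hxy, zeta_of_le hyz, mul_one]
      _ = (1 : IncidenceAlgebra R G) x z := by
          rw [sum_Icc_inv_mul hG hxz, sum_Icc_mu_right, IncidenceAlgebra.one_apply]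
          simp only [eq_inv_mul_iff_mul_eq, mul_one]
  rw [← translationKernel_of_le (f := mu R 1) hxz, left_inv_eq_right_inv hinv zeta_mul_mu]

theorem mu_one_eq_of_sum_Icc_inv_mul
    (hG : ∀ x y z : G, x ≤ y ∧ y ≤ z ↔ x ≤ z ∧ x⁻¹ * y ≤ x⁻¹ * z) {f : G → R}
    (hf : ∀ g, ∑ h ∈ Finset.Icc 1 g, f (h⁻¹ * g) = if g = 1 then 1 else 0) {g : G} (hg : 1 ≤ g) :
    mu R 1 g = f g := by
  classical
  have hinv : (zeta R * translationKernel f : IncidenceAlgebra R G) = 1 := by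
    ext x z hxz
    calc (zeta R * translationKernel f : IncidenceAlgebra R G) x z
        = ∑ y ∈ Finset.Icc x z, f ((x⁻¹ * y)⁻¹ * (x⁻¹ * z)) := by
          refine Finset.sum_congr rfl fun y hy => ?_
          obtain ⟨hxy, hyz⟩ := Finset.mem_Icc.1 hy
          rw [translationKernel_of_le hyz, zeta_of_le hxy, one_mul, mul_inv_rev, inv_inv, mul_assoc,
            mul_inv_cancel_left]
      _ = (1 : IncidenceAlgebra R G) x z := by
          rw [sum_Icc_inv_mul hG hxz fun h => f (h⁻¹ * (x⁻¹ * z)), hf, IncidenceAlgebra.one_apply]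
          simp only [inv_mul_eq_one]
  rw [left_inv_eq_right_inv (mu_mul_zeta R G) hinv, translationKernel_of_le hg, inv_one, one_mul]

end TranslationInvariance

section CycleStatistics

variable {α : Type*} [DecidableEq α]

lemma formPerm_append_cons (l : List α) (a : α) (m : List α) :
    (l ++ a :: m).formPerm = (l ++ [a]).formPerm * (a :: m).formPerm := by
  induction l with
  | nil => simp
  | cons x l ih =>
    rcases l with _ | ⟨y, l⟩
    · simp
    · simp only [List.cons_append, List.formPerm_cons_cons] at ih ⊢
      rw [ih, mul_assoc]

lemma swap_mul_formPerm_append {p q : α} {l m : List α} (h : (p :: l ++ q :: m).Nodup) :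
    swap p q * (p :: l ++ q :: m).formPerm = (p :: l).formPerm * (q :: m).formPerm := by
  have hrot : (q :: p :: l).rotate 1 = p :: l ++ [q] := by simp
  have hnodup : (q :: p :: l).Nodup := by
    rw [← List.nodup_rotate (n := 1), hrot]
    exact h.sublist (by simp)
  rw [formPerm_append_cons, ← hrot, List.formPerm_rotate_one _ hnodup, List.formPerm_cons_cons,
    swap_comm q p, mul_assoc, swap_mul_self_mul]

lemma formPerm_disjoint {l : List α} {r : Perm α} (h : ∀ x ∈ l, r x = x) :
    l.formPerm.Disjoint r := fun x =>
  (em (x ∈ l)).symm.imp List.formPerm_apply_of_notMem (h x)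

lemma exists_formPerm_mul [Finite α] (g : Perm α) (p : α) :
    ∃ (l : List α) (r : Perm α), (p :: l).Nodup ∧ g = (p :: l).formPerm * r ∧
      (∀ x ∈ p :: l, r x = x) ∧ ∀ x, x ∈ p :: l ↔ SameCycle g p x := by
  cases nonempty_fintype α
  by_cases hp : g p = p
  · refine ⟨[], g, by simp, by simp, by simpa using hp, fun x => ?_⟩
    rw [List.mem_singleton]
    exact ⟨fun h => h ▸ SameCycle.refl _ _, fun h => (h.eq_of_left hp).symm⟩
  · have hmem : p ∈ g.support := mem_support.2 hp
    obtain ⟨a, l, hl⟩ :=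
      List.exists_cons_of_ne_nil (mt toList_eq_nil_iff.1 (not_not.2 hmem))
    obtain rfl : a = p := by simpa [hl] using toList_getElem_zero g p hmem
    have hsame (x : α) : x ∈ a :: l ↔ SameCycle g a x := by
      rw [← hl, mem_toList_iff, and_iff_left hmem]
    have hform : (a :: l).formPerm = g.cycleOf a := by rw [← hl, formPerm_toList]
    refine ⟨l, (g.cycleOf a)⁻¹ * g, hl ▸ nodup_toList g a, by rw [hform, mul_inv_cancel_left],
      fun x hx => ?_, hsame⟩
    rw [Perm.mul_apply, Perm.inv_eq_iff_eq, ((hsame x).1 hx).cycleOf_apply]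

lemma exists_formPerm_append_mul [Finite α] {g : Perm α} {p q : α} (hpq : p ≠ q)
    (h : SameCycle g p q) :
    ∃ (l m : List α) (r : Perm α), (p :: l ++ q :: m).Nodup ∧
      g = (p :: l ++ q :: m).formPerm * r ∧ ∀ x ∈ p :: l ++ q :: m, r x = x := by
  obtain ⟨l, r, hl, hg, hr, hsame⟩ := exists_formPerm_mul g p
  obtain ⟨l₁, l₂, rfl⟩ :=
    List.append_of_mem (((List.mem_cons.1 ((hsame q).2 h)).resolve_left hpq.symm))
  exact ⟨l₁, l₂, r, hl, hg, hr⟩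

lemma exists_formPerm_mul_formPerm_mul [Finite α] {g : Perm α} {p q : α} (h : ¬ SameCycle g p q) :
    ∃ (l m : List α) (r : Perm α), (p :: l ++ q :: m).Nodup ∧
      g = (p :: l).formPerm * (q :: m).formPerm * r ∧ ∀ x ∈ p :: l ++ q :: m, r x = x := by
  obtain ⟨l, r, hl, hg, hr, hsame⟩ := exists_formPerm_mul g p
  obtain ⟨m, r', hm, hg', hr', hsame'⟩ := exists_formPerm_mul r q
  have hdisj : ∀ x ∈ p :: l, x ∉ q :: m := fun x hx hx' =>
    h ((hsame q).1 (((hsame' x).1 hx').eq_of_right (hr x hx) ▸ hx))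
  refine ⟨l, m, r', List.nodup_append'.2 ⟨hl, hm, hdisj⟩, by rw [hg, hg', mul_assoc],
    fun x hx => ?_⟩
  rcases List.mem_append.1 hx with hx | hx
  · rw [← inv_mul_eq_iff_eq_mul] at hg'
    rw [← hg', Perm.mul_apply, hr x hx, Perm.inv_eq_iff_eq,
      List.formPerm_apply_of_notMem (hdisj x hx)]
  · exact hr' x hx

variable [Fintype α] {M : Type*} [CommMonoid M]

/-- The multiplicative extension to permutations of a statistic `f` on cycles, or its additive
extension `cycleSum`. A cycle of length `k` has weight `f (k - 1)`, so that fixed points are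
irrelevant as soon as `f 0` is neutral. -/
@[to_additive]
def cycleProd (f : ℕ → M) (g : Perm α) : M := (g.cycleType.map fun k => f (k - 1)).prod

variable {f : ℕ → M}

@[to_additive cycleSum_one]
lemma cycleProd_one : cycleProd f (1 : Perm α) = 1 := by simp [cycleProd]

@[to_additive cycleSum_inv]
lemma cycleProd_inv (g : Perm α) : cycleProd f g⁻¹ = cycleProd f g := by simp [cycleProd]

@[to_additive cycleSum_mul_of_disjoint]
lemma cycleProd_mul_of_disjoint {g h : Perm α} (hgh : g.Disjoint h) :
    cycleProd f (g * h) = cycleProd f g * cycleProd f h := by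
  simp [cycleProd, hgh.cycleType_mul]

@[to_additive cycleSum_list_prod]
lemma cycleProd_list_prod {l : List (Perm α)} (hl : l.Pairwise Perm.Disjoint) :
    cycleProd f l.prod = (l.map (cycleProd f)).prod := by
  induction l with
  | nil => exact cycleProd_one
  | cons a l ih =>
    rw [List.pairwise_cons] at hl
    rw [List.prod_cons, cycleProd_mul_of_disjoint (disjoint_prod_right l hl.1), ih hl.2,
      List.map_cons, List.prod_cons]

@[to_additive]
lemma cycleProd_of_isCycle {g : Perm α} (hg : g.IsCycle) :
    cycleProd f g = f (g.support.card - 1) := by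
  simp [cycleProd, hg.cycleType]

@[to_additive]
lemma cycleProd_finRotate (hf : f 0 = 1) (n : ℕ) : cycleProd f (finRotate (1 + n)) = f n := by
  rw [add_comm]
  rcases n with _ | n
  · rw [finRotate_one, ← Perm.one_def, cycleProd_one, hf]
  · simp [cycleProd, cycleType_finRotate]

@[to_additive]
lemma cycleProd_formPerm (hf : f 0 = 1) {p : α} {l : List α} (hl : (p :: l).Nodup) :
    cycleProd f (p :: l).formPerm = f l.length := by
  rcases l with _ | ⟨q, l⟩
  · rw [List.formPerm_singleton, cycleProd_one, List.length_nil, hf]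
  · rw [cycleProd_of_isCycle (List.isCycle_formPerm hl (by simp)),
      List.support_formPerm_of_nodup _ hl (by simp), List.toFinset_card_of_nodup hl,
      List.length_cons, Nat.add_sub_cancel]

@[to_additive cycleSum_formPerm_mul]
lemma cycleProd_formPerm_mul (hf : f 0 = 1) {p : α} {l : List α} {r : Perm α}
    (hl : (p :: l).Nodup) (hr : ∀ x ∈ p :: l, r x = x) :
    cycleProd f ((p :: l).formPerm * r) = f l.length * cycleProd f r := by
  rw [cycleProd_mul_of_disjoint (formPerm_disjoint hr), cycleProd_formPerm hf hl]

@[to_additive cycleSum_formPerm_mul_formPerm_mul]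
lemma cycleProd_formPerm_mul_formPerm_mul (hf : f 0 = 1) {p q : α} {l m : List α} {r : Perm α}
    (hnodup : (p :: l ++ q :: m).Nodup) (hr : ∀ x ∈ p :: l ++ q :: m, r x = x) :
    cycleProd f ((p :: l).formPerm * (q :: m).formPerm * r) =
      f l.length * (f m.length * cycleProd f r) := by
  obtain ⟨hl, hm, hdisj⟩ := List.nodup_append'.1 hnodup
  have hfix : ∀ x ∈ p :: l, ((q :: m).formPerm * r) x = x := fun x hx => by
    rw [Perm.mul_apply, hr x (List.mem_append_left _ hx),
      List.formPerm_apply_of_notMem (hdisj hx)]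
  rw [mul_assoc, cycleProd_formPerm_mul hf hl hfix,
    cycleProd_formPerm_mul hf hm fun x hx => hr x (List.mem_append_right _ hx)]

end CycleStatistics

section AbsoluteLength

variable {α : Type*} [Fintype α] [DecidableEq α]

/-- The absolute length of a permutation: the least number of transpositions with product `g`. -/
def absLen (g : Perm α) : ℕ := cycleSum id g

@[simp]
lemma absLen_one : absLen (1 : Perm α) = 0 := cycleSum_one

@[simp]
lemma absLen_inv (g : Perm α) : absLen g⁻¹ = absLen g := cycleSum_inv g

lemma absLen_of_isCycle {g : Perm α} (hg : g.IsCycle) : absLen g = g.support.card - 1 :=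
  cycleSum_of_isCycle hg

lemma absLen_list_prod_of_pairwise_disjoint {l : List (Perm α)} (hl : l.Pairwise Perm.Disjoint) :
    absLen l.prod = (l.map absLen).sum :=
  cycleSum_list_prod hl

lemma absLen_lt_card_support {g : Perm α} (hg : g ≠ 1) : absLen g < g.support.card := by
  rw [← sum_cycleType, absLen, cycleSum]
  conv_rhs => rw [← Multiset.map_id g.cycleType]
  refine Multiset.sum_lt_sum_of_nonempty (mt cycleType_eq_zero.1 hg) fun k hk => ?_
  exact Nat.sub_lt (one_pos.trans (one_lt_of_mem_cycleType hk)) one_pos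

lemma absLen_formPerm_mul_formPerm_mul_add_one {p q : α} {l m : List α} {r : Perm α}
    (hnodup : (p :: l ++ q :: m).Nodup) (hr : ∀ x ∈ p :: l ++ q :: m, r x = x) :
    absLen ((p :: l).formPerm * (q :: m).formPerm * r) + 1 =
      absLen ((p :: l ++ q :: m).formPerm * r) := by
  have hjoined : absLen ((p :: l ++ q :: m).formPerm * r) = (l ++ q :: m).length + absLen r :=
    cycleSum_formPerm_mul rfl hnodup hr
  have hsplit : absLen ((p :: l).formPerm * (q :: m).formPerm * r) =
      l.length + (m.length + absLen r) :=
    cycleSum_formPerm_mul_formPerm_mul rfl hnodup hr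
  rw [hjoined, hsplit, List.length_append, List.length_cons]
  lia

lemma absLen_swap_mul_of_sameCycle {g : Perm α} {p q : α} (hpq : p ≠ q) (h : SameCycle g p q) :
    absLen (swap p q * g) + 1 = absLen g := by
  obtain ⟨l, m, r, hnodup, rfl, hr⟩ := exists_formPerm_append_mul hpq h
  rw [← mul_assoc, swap_mul_formPerm_append hnodup,
    absLen_formPerm_mul_formPerm_mul_add_one hnodup hr]

lemma absLen_swap_mul_of_not_sameCycle {g : Perm α} {p q : α} (h : ¬ SameCycle g p q) :
    absLen (swap p q * g) = absLen g + 1 := by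
  obtain ⟨l, m, r, hnodup, rfl, hr⟩ := exists_formPerm_mul_formPerm_mul h
  rw [absLen_formPerm_mul_formPerm_mul_add_one hnodup hr, ← swap_mul_formPerm_append hnodup,
    mul_assoc, swap_mul_self_mul]

lemma exists_absLen_swap_mul_add_one {g : Perm α} (hg : g ≠ 1) :
    ∃ p q, absLen (swap p q * g) + 1 = absLen g := by
  obtain ⟨p, hp⟩ := not_forall.1 (mt Perm.ext hg)
  exact ⟨p, g p, absLen_swap_mul_of_sameCycle (Ne.symm hp) (sameCycle_apply_right.2 (.refl g p))⟩

lemma absLen_pos {g : Perm α} (hg : g ≠ 1) : 0 < absLen g := by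
  obtain ⟨p, q, h⟩ := exists_absLen_swap_mul_add_one hg
  lia

lemma absLen_swap_mul_le (p q : α) (g : Perm α) : absLen (swap p q * g) ≤ absLen g + 1 := by
  rcases eq_or_ne p q with rfl | hpq
  · rw [swap_self, ← Perm.one_def, one_mul]
    exact Nat.le_succ _
  by_cases h : SameCycle g p q
  · have := absLen_swap_mul_of_sameCycle hpq h
    lia
  · exact (absLen_swap_mul_of_not_sameCycle h).le

lemma absLen_mul_le (g h : Perm α) : absLen (g * h) ≤ absLen g + absLen h := by
  induction hk : absLen g using Nat.strong_induction_on generalizing g with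
  | _ k ih =>
    rcases eq_or_ne g 1 with rfl | hg
    · simp
    · obtain ⟨p, q, hpq⟩ := exists_absLen_swap_mul_add_one hg
      have hle := absLen_swap_mul_le p q (swap p q * g * h)
      rw [mul_assoc (swap p q), swap_mul_self_mul] at hle
      have := ih _ (by lia) (swap p q * g) rfl
      rw [mul_assoc] at this
      lia

lemma absLen_list_prod_le (l : List (Perm α)) : absLen l.prod ≤ (l.map absLen).sum := by
  induction l with
  | nil => simp
  | cons a l ih =>
    rw [List.prod_cons, List.map_cons, List.sum_cons]
    exact (absLen_mul_le _ _).trans (Nat.add_le_add_left ih _)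

lemma absLen_swap_mul_of_apply_eq {g : Perm α} {p q : α} (hg : g p = p) (hpq : p ≠ q) :
    absLen (swap p q * g) = absLen g + 1 :=
  absLen_swap_mul_of_not_sameCycle fun h => hpq (h.eq_of_left hg)

lemma absLen_mul_swap_of_apply_eq {g : Perm α} {p q : α} (hg : g p = p) (hpq : p ≠ q) :
    absLen (g * swap p q) = absLen g + 1 := by
  rw [← absLen_inv, mul_inv_rev, swap_inv, ← absLen_inv g]
  exact absLen_swap_mul_of_apply_eq (Perm.inv_eq_iff_eq.2 hg.symm) hpq

lemma absLen_swap {p q : α} (hpq : p ≠ q) : absLen (swap p q) = 1 := by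
  simpa using absLen_mul_swap_of_apply_eq (g := 1) rfl hpq

end AbsoluteLength

section AbsoluteOrder

variable {α : Type*} [DecidableEq α]

/-- The permutation obtained from `x` by removing the point `p` from its cycle. It is the largest
permutation below `x` in the absolute order that fixes `p`. -/
def removePoint (p : α) (x : Perm α) : Perm α := x * swap p (x⁻¹ p)

lemma removePoint_apply_self (p : α) (x : Perm α) : removePoint p x p = p := by simp [removePoint]

lemma removePoint_of_apply_eq {p : α} {x : Perm α} (hx : x p = p) : removePoint p x = x := by
  rw [removePoint, Perm.inv_eq_iff_eq.2 hx.symm, swap_self, ← Perm.one_def, mul_one]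

lemma removePoint_eq_one_iff {p : α} {x : Perm α} : removePoint p x = 1 ↔ ∃ q, swap p q = x := by
  constructor
  · intro h
    rw [removePoint, mul_eq_one_iff_eq_inv, swap_inv] at h
    exact ⟨_, h.symm⟩
  · rintro ⟨q, rfl⟩
    simp [removePoint]

variable [Fintype α]

/-- The absolute order on permutations: `x ≤ y` when some shortest factorization of `y` into
transpositions starts with a shortest factorization of `x`. Below a long cycle, it is the lattice of
noncrossing partitions. -/
abbrev absoluteOrder : PartialOrder (Perm α) where
  le x y := absLen x + absLen (x⁻¹ * y) = absLen y
  le_refl x := by simp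
  le_trans x y z hxy hyz := by
    have hle₁ := absLen_mul_le x (x⁻¹ * z)
    have hle₂ := absLen_mul_le (x⁻¹ * y) (y⁻¹ * z)
    rw [mul_inv_cancel_left] at hle₁
    rw [mul_assoc, mul_inv_cancel_left] at hle₂
    lia
  le_antisymm x y hxy hyx := by
    by_contra h
    have := absLen_pos (mt inv_mul_eq_one.1 h)
    lia

attribute [local instance] absoluteOrder

lemma absoluteOrder_le_iff {x y : Perm α} : x ≤ y ↔ absLen x + absLen (x⁻¹ * y) = absLen y :=
  Iff.rfl

open Classical in
/-- Intervals of the absolute order, as finite sets. -/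
noncomputable abbrev absoluteOrderLocallyFinite : LocallyFiniteOrder (Perm α) :=
  Fintype.toLocallyFiniteOrder

attribute [local instance] absoluteOrderLocallyFinite

lemma one_le_perm (x : Perm α) : 1 ≤ x := by simp [absoluteOrder_le_iff]

lemma le_and_le_iff_inv_mul_le_inv_mul (x y z : Perm α) :
    x ≤ y ∧ y ≤ z ↔ x ≤ z ∧ x⁻¹ * y ≤ x⁻¹ * z := by
  have hle₁ := absLen_mul_le x (x⁻¹ * y)
  have hle₂ := absLen_mul_le x (x⁻¹ * z)
  have hle₃ := absLen_mul_le y (y⁻¹ * z)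
  have hle₄ := absLen_mul_le (x⁻¹ * y) (y⁻¹ * z)
  rw [mul_inv_cancel_left] at hle₁ hle₂ hle₃
  rw [mul_assoc, mul_inv_cancel_left] at hle₄
  simp only [absoluteOrder_le_iff, mul_inv_rev, inv_inv, mul_assoc, mul_inv_cancel_left]
  lia

lemma swap_le_iff_sameCycle {p q : α} {x : Perm α} : swap p q ≤ x ↔ SameCycle x p q := by
  rcases eq_or_ne p q with rfl | hpq
  · rw [swap_self, ← Perm.one_def]
    exact iff_of_true (one_le_perm x) (.refl x p)
  rw [absoluteOrder_le_iff, absLen_swap hpq, swap_inv]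
  by_cases h : SameCycle x p q
  · have := absLen_swap_mul_of_sameCycle hpq h
    exact iff_of_true (by lia) h
  · have := absLen_swap_mul_of_not_sameCycle h
    exact iff_of_false (by lia) h

lemma apply_eq_of_le {p : α} {x y : Perm α} (h : y ≤ x) (hx : x p = p) : y p = p := by
  have hswap : swap p (y p) ≤ x :=
    (swap_le_iff_sameCycle.2 (sameCycle_apply_right.2 (.refl y p))).trans h
  exact ((swap_le_iff_sameCycle.1 hswap).eq_of_left hx).symm

lemma absLen_removePoint_add_one {p : α} {x : Perm α} (hx : x p ≠ p) :
    absLen (removePoint p x) + 1 = absLen x := by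
  have hne : p ≠ x⁻¹ p := fun h => hx (Perm.eq_inv_iff_eq.1 h)
  rw [← absLen_mul_swap_of_apply_eq (removePoint_apply_self p x) hne, removePoint, mul_assoc,
    swap_mul_self, mul_one]

lemma absLen_inv_mul_removePoint_add_one {p : α} {x y : Perm α} (hx : x p ≠ p) (hy : y p = p) :
    absLen (y⁻¹ * removePoint p x) + 1 = absLen (y⁻¹ * x) := by
  have hremove : y⁻¹ * removePoint p x = removePoint p (y⁻¹ * x) := by
    simp [removePoint, mul_assoc, hy]
  rw [hremove, absLen_removePoint_add_one]
  rwa [Perm.mul_apply, Ne, Perm.inv_eq_iff_eq, hy]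

lemma le_removePoint_iff_le {p : α} {x y : Perm α} (hy : y p = p) :
    y ≤ removePoint p x ↔ y ≤ x := by
  by_cases hx : x p = p
  · rw [removePoint_of_apply_eq hx]
  · rw [absoluteOrder_le_iff, absoluteOrder_le_iff, ← absLen_removePoint_add_one hx,
      ← absLen_inv_mul_removePoint_add_one hx hy, ← add_assoc, Nat.add_right_cancel_iff]

lemma le_removePoint_iff {p : α} {x y : Perm α} : y ≤ removePoint p x ↔ y ≤ x ∧ y p = p := by
  by_cases hy : y p = p
  · rw [le_removePoint_iff_le hy, and_iff_left hy]
  · exact iff_of_false (fun h => hy (apply_eq_of_le h (removePoint_apply_self p x)))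
      (fun h => hy h.2)

end AbsoluteOrder

section MoebiusFunction

lemma sum_toFinset_cycleProd_swap_mul {α M : Type*} [Fintype α] [DecidableEq α] [CommSemiring M]
    {f : ℕ → M} (hf : f 0 = 1) {p : α} {l : List α} {r : Perm α} (hl : (p :: l).Nodup)
    (hr : ∀ x ∈ p :: l, r x = x) {k : ℕ} (hk : l.length = k + 1) :
    ∑ q ∈ l.toFinset, cycleProd f (swap p q * ((p :: l).formPerm * r)) =
      (∑ ij ∈ antidiagonal k, f ij.1 * f ij.2) * cycleProd f r := by
  have hterm (i : ℕ) (hi : i < l.length) :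
      cycleProd f (swap p l[i] * ((p :: l).formPerm * r)) = f i * f (k - i) * cycleProd f r := by
    have hsplit : p :: l = p :: l.take i ++ l[i] :: l.drop (i + 1) := by simp
    rw [hsplit] at hl hr
    rw [hsplit, ← mul_assoc, swap_mul_formPerm_append hl,
      cycleProd_formPerm_mul_formPerm_mul hf hl hr, List.length_take_of_le hi.le, List.length_drop,
      hk, Nat.add_sub_add_right, mul_assoc]
  rw [List.sum_toFinset _ hl.of_cons, ← Fin.sum_univ_getElem, Finset.sum_mul,
    Finset.Nat.sum_antidiagonal_eq_sum_range_succ_mk, Nat.succ_eq_add_one, ← hk, Finset.sum_range]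
  refine Fintype.sum_equiv (finCongr (by simp)) _ _ fun i => ?_
  simp [hterm]

/-- The Catalan numbers with alternating signs. -/
def signedCatalan (k : ℕ) : ℤ := (-1) ^ k * catalan k

lemma signedCatalan_zero : signedCatalan 0 = 1 := by simp [signedCatalan]

lemma signedCatalan_succ (k : ℕ) :
    signedCatalan (k + 1) =
      -∑ ij ∈ antidiagonal k, signedCatalan ij.1 * signedCatalan ij.2 := by
  rw [signedCatalan, catalan_succ', Nat.cast_sum, Finset.mul_sum, ← Finset.sum_neg_distrib]
  refine Finset.sum_congr rfl fun ij hij => ?_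
  rw [← Finset.HasAntidiagonal.mem_antidiagonal.1 hij, signedCatalan, signedCatalan]
  push_cast
  ring

variable {α : Type*} [Fintype α] [DecidableEq α]

lemma sum_sameCycle_cycleProd_signedCatalan {g : Perm α} {p : α} (hp : g p ≠ p) :
    ∑ q with SameCycle g p q, cycleProd signedCatalan (swap p q * g) = 0 := by
  obtain ⟨l, r, hl, rfl, hr, hsame⟩ := exists_formPerm_mul g p
  have hfilter : ({q | SameCycle ((p :: l).formPerm * r) p q} : Finset α) =
      insert p l.toFinset := by
    ext q
    rw [Finset.mem_filter_univ, ← hsame, ← List.toFinset_cons, List.mem_toFinset]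
  have hne : l ≠ [] := by
    rintro rfl
    exact hp (by simpa using hr p List.mem_cons_self)
  obtain ⟨k, hk⟩ := Nat.exists_eq_add_one.2 (List.length_pos_iff.2 hne)
  rw [hfilter, Finset.sum_insert (mt List.mem_toFinset.1 (List.nodup_cons.1 hl).1),
    sum_toFinset_cycleProd_swap_mul signedCatalan_zero hl hr hk, swap_self, ← Perm.one_def, one_mul,
    cycleProd_formPerm_mul signedCatalan_zero hl hr, hk, signedCatalan_succ, ← add_mul,
    neg_add_cancel, zero_mul]

attribute [local instance] absoluteOrder absoluteOrderLocallyFinite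

lemma sum_sameCycle_mu_one_swap_mul {g : Perm α} {p : α} (hp : g p ≠ p) :
    ∑ q with SameCycle g p q, mu ℤ 1 (swap p q * g) = 0 := by
  have hswap : Function.Injective (swap p) := fun q q' h => by
    simpa using congrArg (· p) h
  have himage : {x ∈ Finset.Icc 1 g | removePoint p x = 1} =
      ({q | SameCycle g p q} : Finset α).image (swap p) := by
    ext x
    simp only [Finset.mem_filter, Finset.mem_Icc, Finset.mem_image, Finset.mem_univ, true_and,
      one_le_perm, removePoint_eq_one_iff]
    constructor
    · rintro ⟨hx, q, rfl⟩
      exact ⟨q, swap_le_iff_sameCycle.1 hx, rfl⟩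
    · rintro ⟨q, hq, rfl⟩
      exact ⟨swap_le_iff_sameCycle.2 hq, q, rfl⟩
  calc ∑ q with SameCycle g p q, mu ℤ 1 (swap p q * g)
      = ∑ q with SameCycle g p q, mu ℤ (swap p q) g := by
        refine Finset.sum_congr rfl fun q hq => ?_
        rw [mu_eq_mu_one_inv_mul le_and_le_iff_inv_mul_le_inv_mul
          (swap_le_iff_sameCycle.2 (Finset.mem_filter_univ _ |>.1 hq)), swap_inv]
    _ = ∑ x ∈ Finset.Icc 1 g with removePoint p x = 1, mu ℤ x g := by
        rw [himage, Finset.sum_image hswap.injOn]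
    _ = 0 := sum_mu_filter_eq_zero (S := {y : Perm α | y p = p}) (fun _ _ => le_removePoint_iff) hp

theorem mu_one_eq_cycleProd_signedCatalan (g : Perm α) :
    mu ℤ 1 g = cycleProd signedCatalan g := by
  induction hk : absLen g using Nat.strong_induction_on generalizing g with
  | _ k ih =>
    rcases eq_or_ne g 1 with rfl | hg
    · rw [mu_self, cycleProd_one]
    · obtain ⟨p, hp⟩ := not_forall.1 (mt Perm.ext hg)
      have hmem : p ∈ ({q | SameCycle g p q} : Finset α) :=
        (Finset.mem_filter_univ p).2 (.refl g p)
      have hswap : swap p p * g = g := by rw [swap_self, ← Perm.one_def, one_mul]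
      have hmu := sum_sameCycle_mu_one_swap_mul hp
      have hcatalan := sum_sameCycle_cycleProd_signedCatalan hp
      rw [← Finset.add_sum_erase _ _ hmem, hswap] at hmu hcatalan
      refine add_right_cancel ((hmu.trans hcatalan.symm).trans
        (congrArg _ (Finset.sum_congr rfl fun q hq => ?_)))
      rw [Finset.mem_erase, Finset.mem_filter_univ] at hq
      have := absLen_swap_mul_of_sameCycle hq.1.symm hq.2
      exact (ih _ (by lia) _ rfl).symm

end MoebiusFunction

section MinimalFactorizations

variable {α : Type*} [Fintype α] [DecidableEq α] {a b g : Perm α} {l m : List (Perm α)}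

lemma support_subset_of_commute (ha : a.IsCycle) (hab : Commute a b) {x : α} (hxa : a x ≠ x)
    (hxb : b x ≠ x) : a.support ⊆ b.support := by
  intro y hy
  rw [mem_support] at hy ⊢
  obtain ⟨i, rfl⟩ := ha.exists_zpow_eq hxa hy
  rw [← Perm.mul_apply, ← (hab.zpow_left i).eq, Perm.mul_apply]
  exact fun h => hxb ((a ^ i).injective h)

lemma disjoint_of_commute_of_absLen_add_le (ha : a.IsCycle) (hb : b.IsCycle)
    (hab : Commute a b) (habsLen : absLen a + absLen b ≤ absLen (a * b)) : a.Disjoint b := by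
  intro x
  by_contra! ⟨hxa, hxb⟩
  have hsupport : b.support = a.support :=
    (support_subset_of_commute hb hab.symm hxb hxa).antisymm
      (support_subset_of_commute ha hab hxa hxb)
  have hposa := absLen_pos ha.ne_one
  have hposb := absLen_pos hb.ne_one
  have hne : a * b ≠ 1 := fun h => by
    rw [h, absLen_one] at habsLen
    lia
  have hlt : absLen (a * b) < a.support.card :=
    (absLen_lt_card_support hne).trans_le <| Finset.card_le_card <| by
      simpa [hsupport] using support_mul_le a b
  rw [absLen_of_isCycle ha] at habsLen hposa
  lia

/-- Minimal factorizations of a permutation into cycles. The factorization is minimal if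
the lengths of its factors add up. -/
structure IsMinFact (g : Perm α) (l : List (Perm α)) : Prop where
  isCycle : ∀ σ ∈ l, σ.IsCycle
  prod_eq : l.prod = g
  sum_absLen : (l.map absLen).sum = absLen g

lemma isMinFact_nil_iff : IsMinFact g [] ↔ g = 1 := by
  constructor
  · exact fun h => h.prod_eq.symm
  · rintro rfl
    exact ⟨by simp, rfl, absLen_one.symm⟩

lemma IsMinFact.length_le (hl : IsMinFact g l) : l.length ≤ absLen g := by
  rw [← hl.sum_absLen, ← List.length_map (f := absLen)]
  refine List.length_le_sum_of_one_le _ fun k hk => ?_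
  obtain ⟨σ, hσ, rfl⟩ := List.mem_map.1 hk
  exact absLen_pos (hl.isCycle σ hσ).ne_one

lemma finite_setOf_isMinFact (g : Perm α) : {l | IsMinFact g l}.Finite :=
  (List.finite_length_le _ (absLen g)).subset fun _ hl => hl.length_le

lemma isMinFact_toList_cycleFactorsFinset (h : Perm α) :
    IsMinFact h h.cycleFactorsFinset.toList := by
  obtain ⟨hcycle, hdisjoint, hprod⟩ :=
    (cycleFactorsFinset_eq_list_toFinset h.cycleFactorsFinset.nodup_toList).1
      (Finset.toList_toFinset _).symm
  exact ⟨hcycle, hprod, by rw [← absLen_list_prod_of_pairwise_disjoint hdisjoint, hprod]⟩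

attribute [local instance] absoluteOrder

lemma isMinFact_append_iff :
    IsMinFact g (m ++ l) ↔ m.prod ≤ g ∧ IsMinFact m.prod m ∧ IsMinFact (m.prod⁻¹ * g) l := by
  rw [absoluteOrder_le_iff]
  constructor
  · rintro ⟨hcycle, rfl, hsum⟩
    rw [List.map_append, List.sum_append, List.prod_append] at hsum
    rw [List.prod_append, inv_mul_cancel_left]
    have hm := absLen_list_prod_le m
    have hl := absLen_list_prod_le l
    have hml := absLen_mul_le m.prod l.prod
    exact ⟨by lia, ⟨fun σ hσ => hcycle σ (List.mem_append_left l hσ), rfl, by lia⟩,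
      ⟨fun σ hσ => hcycle σ (List.mem_append_right m hσ), rfl, by lia⟩⟩
  · rintro ⟨hle, hm, hl⟩
    refine ⟨fun σ hσ => (List.mem_append.1 hσ).elim (hm.isCycle σ) (hl.isCycle σ), ?_, ?_⟩
    · rw [List.prod_append, hl.prod_eq, mul_inv_cancel_left]
    · rw [List.map_append, List.sum_append, hm.sum_absLen, hl.sum_absLen, hle]

lemma IsMinFact.disjoint_of_commute (hl : IsMinFact g (a :: b :: l)) (hab : Commute a b) :
    a.Disjoint b := by
  have hpair : IsMinFact _ [a, b] := (isMinFact_append_iff (m := [a, b]).1 hl).2.1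
  refine disjoint_of_commute_of_absLen_add_le (hpair.isCycle a (by simp))
    (hpair.isCycle b (by simp)) hab ?_
  simpa using hpair.sum_absLen.le

end MinimalFactorizations

section FactorizationTraces

variable {n : ℕ} {a b : Perm (Fin n)} {l l' m : List (Perm (Fin n))}

namespace FactEquiv

lemma symm (h : FactEquiv l l') : FactEquiv l' l := by
  induction h with
  | refl l => exact .refl l
  | swap l₁ l₂ a b h => exact .swap l₁ l₂ b a h.symm
  | trans _ _ ih₁ ih₂ => exact ih₂.trans ih₁

lemma perm (h : FactEquiv l l') : l.Perm l' := by
  induction h with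
  | refl l => exact .refl l
  | swap l₁ l₂ a b _ => exact (List.Perm.swap b a l₂).append_left l₁
  | trans _ _ ih₁ ih₂ => exact ih₁.trans ih₂

lemma prod_eq (h : FactEquiv l l') : l.prod = l'.prod := by
  induction h with
  | refl l => rfl
  | swap l₁ l₂ a b h =>
    simp only [List.prod_append, List.prod_cons]
    rw [← mul_assoc a, h, mul_assoc b]
  | trans _ _ ih₁ ih₂ => exact ih₁.trans ih₂

lemma append_left (m : List (Perm (Fin n))) (h : FactEquiv l l') :
    FactEquiv (m ++ l) (m ++ l') := by
  induction h with
  | refl l => exact .refl _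
  | swap l₁ l₂ a b h =>
    rw [← List.append_assoc, ← List.append_assoc]
    exact .swap _ l₂ a b h
  | trans _ _ ih₁ ih₂ => exact ih₁.trans ih₂

lemma cons (a : Perm (Fin n)) (h : FactEquiv l l') : FactEquiv (a :: l) (a :: l') :=
  h.append_left [a]

lemma erase (c : Perm (Fin n)) (h : FactEquiv l l') : FactEquiv (l.erase c) (l'.erase c) := by
  induction h with
  | refl l => exact .refl _
  | swap l₁ l₂ a b h =>
    by_cases hc : c ∈ l₁
    · rw [List.erase_append_left _ hc, List.erase_append_left _ hc]
      exact .swap _ l₂ a b h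
    · rw [List.erase_append_right _ hc, List.erase_append_right _ hc]
      refine append_left l₁ ?_
      by_cases ha : a = c <;> by_cases hb : b = c <;>
        simp only [List.erase_cons, beq_iff_eq, ha, hb, ↓reduceIte]
      on_goal 4 => exact .swap [] _ a b h
      all_goals exact .refl _
  | trans _ _ ih₁ ih₂ => exact ih₁.trans ih₂

lemma of_append_left (h : FactEquiv (m ++ l) (m ++ l')) : FactEquiv l l' := by
  induction m with
  | nil => exact h
  | cons a m ih => exact ih (by simpa using h.erase a)

lemma filter_eq_or_eq (hab : a * b ≠ b * a) (h : FactEquiv l l') :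
    l.filter (fun x => x = a ∨ x = b) = l'.filter (fun x => x = a ∨ x = b) := by
  induction h with
  | refl l => rfl
  | swap l₁ l₂ x y h =>
    simp only [List.filter_append, List.filter_cons]
    congr 1
    by_cases hx : x = a ∨ x = b <;> by_cases hy : y = a ∨ y = b
    · rcases hx with rfl | rfl <;> rcases hy with rfl | rfl
      · rfl
      · exact absurd h hab
      · exact absurd h.symm hab
      · rfl
    all_goals simp [hx, hy]
  | trans _ _ ih₁ ih₂ => exact ih₁.trans ih₂

lemma mul_comm_of_cons (h : FactEquiv (a :: l) (b :: l')) : a * b = b * a := by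
  by_contra hab
  have hhead : a = b := by simpa using congrArg List.head? (h.filter_eq_or_eq hab)
  exact hab (by rw [hhead])

lemma cons_erase_of_cons (hab : a ≠ b) (h : FactEquiv (a :: l) (b :: l')) :
    FactEquiv l' (a :: l.erase b) := by
  simpa [List.erase_cons_tail, hab] using (h.erase b).symm

end FactEquiv

lemma exists_factEquiv_cons (ha : a ∈ m) (hm : ∀ b ∈ m, a * b = b * a)
    (l : List (Perm (Fin n))) : ∃ l', FactEquiv (m ++ l) (a :: l') := by
  induction m with
  | nil => simp at ha
  | cons b m ih =>
    rcases eq_or_ne a b with rfl | hab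
    · exact ⟨m ++ l, .refl _⟩
    · obtain ⟨l', hl'⟩ := ih ((List.mem_cons.1 ha).resolve_left hab)
        fun c hc => hm c (List.mem_cons_of_mem b hc)
      exact ⟨b :: l', (hl'.cons b).trans (.swap [] l' b a (hm b List.mem_cons_self).symm)⟩

lemma exists_factEquiv_append (hm : m.Nodup) (h : ∀ a ∈ m, ∃ l', FactEquiv l (a :: l')) :
    ∃ l', FactEquiv l (m ++ l') := by
  induction m generalizing l with
  | nil => exact ⟨l, .refl _⟩
  | cons a m ih =>
    obtain ⟨l₁, hl₁⟩ := h a List.mem_cons_self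
    obtain ⟨ham, hm⟩ := List.nodup_cons.1 hm
    obtain ⟨l₂, hl₂⟩ := ih hm (l := l₁) fun b hb => by
      obtain ⟨l', hl'⟩ := h b (List.mem_cons_of_mem a hb)
      exact ⟨_, (hl'.symm.trans hl₁).cons_erase_of_cons (ne_of_mem_of_not_mem hb ham)⟩
    exact ⟨l₂, hl₁.trans (hl₂.cons a)⟩

/-- The setoid of factorizations up to swapping adjacent commuting factors. -/
abbrev FactEquiv.setoid (n : ℕ) : Setoid (List (Perm (Fin n))) where
  r := FactEquiv
  iseqv := ⟨.refl, .symm, .trans⟩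

attribute [local instance] FactEquiv.setoid

/-- Equivalence classes of factorizations, which are the traces of Cartier and Foata. -/
abbrev FactTrace (n : ℕ) : Type := Quotient (FactEquiv.setoid n)

namespace FactTrace

/-- The number of factors of a trace. -/
def length : FactTrace n → ℕ := Quotient.lift List.length fun _ _ h => h.perm.length_eq

/-- Multiplication of a trace by a list of factors on the left. -/
def prepend (m : List (Perm (Fin n))) : FactTrace n → FactTrace n :=
  Quotient.map (m ++ ·) fun _ _ h => h.append_left m

lemma prepend_injective (m : List (Perm (Fin n))) : Function.Injective (prepend m) := by
  rintro ⟨l⟩ ⟨l'⟩ h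
  exact Quotient.sound (FactEquiv.of_append_left (Quotient.exact h))

lemma length_prepend (m : List (Perm (Fin n))) (t : FactTrace n) :
    (t.prepend m).length = m.length + t.length := by
  obtain ⟨l⟩ := t
  exact List.length_append

open Classical in
/-- The factors of a trace which can be moved to the front. -/
noncomputable def initialFactors (t : FactTrace n) : Finset (Perm (Fin n)) :=
  {a | ∃ l, ⟦a :: l⟧ = t}

lemma mem_initialFactors {t : FactTrace n} : a ∈ t.initialFactors ↔ ∃ l, ⟦a :: l⟧ = t := by
  simp only [initialFactors, Finset.mem_filter_univ]

lemma initialFactors_eq_empty_iff {t : FactTrace n} : t.initialFactors = ∅ ↔ t = ⟦[]⟧ := by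
  constructor
  · obtain ⟨l⟩ := t
    rcases l with _ | ⟨a, l⟩
    · exact fun _ => rfl
    · exact fun h => absurd (mem_initialFactors.2 ⟨l, rfl⟩) (h ▸ Finset.notMem_empty a)
  · rintro rfl
    refine Finset.eq_empty_of_forall_notMem fun a ha => ?_
    obtain ⟨l, hl⟩ := mem_initialFactors.1 ha
    exact List.cons_ne_nil a l (Quotient.exact hl).perm.eq_nil

lemma cycleFactorsFinset_subset_initialFactors_iff {h : Perm (Fin n)} {t : FactTrace n} :
    h.cycleFactorsFinset ⊆ t.initialFactors ↔
      ∃ u : FactTrace n, u.prepend h.cycleFactorsFinset.toList = t := by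
  constructor
  · obtain ⟨l⟩ := t
    intro hsub
    obtain ⟨l', hl'⟩ := exists_factEquiv_append (l := l) h.cycleFactorsFinset.nodup_toList
      fun a ha => by
        obtain ⟨l₁, hl₁⟩ := mem_initialFactors.1 (hsub (Finset.mem_toList.1 ha))
        exact ⟨l₁, (Quotient.exact hl₁).symm⟩
    exact ⟨⟦l'⟧, Quotient.sound hl'.symm⟩
  · rintro ⟨⟨l⟩, rfl⟩ a ha
    obtain ⟨l', hl'⟩ := exists_factEquiv_cons (Finset.mem_toList.2 ha)
      (fun b hb => cycleFactorsFinset_mem_commute' h ha (Finset.mem_toList.1 hb)) l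
    exact mem_initialFactors.2 ⟨l', Quotient.sound hl'.symm⟩

end FactTrace

end FactorizationTraces

section MinimalTraces

variable {n : ℕ} {a b g h : Perm (Fin n)} {l l' : List (Perm (Fin n))}

lemma IsMinFact.of_factEquiv (hl : IsMinFact g l) (h : FactEquiv l l') : IsMinFact g l' where
  isCycle σ hσ := hl.isCycle σ (h.perm.mem_iff.2 hσ)
  prod_eq := h.prod_eq ▸ hl.prod_eq
  sum_absLen := (h.perm.map absLen).sum_eq ▸ hl.sum_absLen

attribute [local instance] absoluteOrder absoluteOrderLocallyFinite FactEquiv.setoid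

/-- The equivalence classes of minimal factorizations of a permutation. -/
noncomputable def minTraces (g : Perm (Fin n)) : Finset (FactTrace n) :=
  ((finite_setOf_isMinFact g).image (⟦·⟧)).toFinset

lemma mk_mem_minTraces : ⟦l⟧ ∈ minTraces g ↔ IsMinFact g l := by
  rw [minTraces, Set.Finite.mem_toFinset]
  constructor
  · rintro ⟨l', hl', heq⟩
    exact IsMinFact.of_factEquiv hl' (Quotient.exact heq)
  · exact fun hl => ⟨l, hl, rfl⟩

lemma prepend_mem_minTraces_iff {t : FactTrace n} :
    t.prepend h.cycleFactorsFinset.toList ∈ minTraces g ↔ h ≤ g ∧ t ∈ minTraces (h⁻¹ * g) := by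
  obtain ⟨l⟩ := t
  have hfactors := isMinFact_toList_cycleFactorsFinset h
  refine mk_mem_minTraces.trans (isMinFact_append_iff.trans ?_)
  rw [hfactors.prod_eq, and_iff_right hfactors]
  exact and_congr_right fun _ => mk_mem_minTraces.symm

lemma isCycle_of_mem_initialFactors {t : FactTrace n} (ht : t ∈ minTraces g)
    (ha : a ∈ t.initialFactors) : a.IsCycle := by
  obtain ⟨l, rfl⟩ := FactTrace.mem_initialFactors.1 ha
  exact (mk_mem_minTraces.1 ht).isCycle a List.mem_cons_self

lemma disjoint_of_mem_initialFactors {t : FactTrace n} (ht : t ∈ minTraces g)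
    (ha : a ∈ t.initialFactors) (hb : b ∈ t.initialFactors) (hab : a ≠ b) : a.Disjoint b := by
  obtain ⟨l, rfl⟩ := FactTrace.mem_initialFactors.1 ha
  obtain ⟨l', hl'⟩ := FactTrace.mem_initialFactors.1 hb
  have hequiv : FactEquiv (a :: l) (b :: l') := (Quotient.exact hl').symm
  have hmin : IsMinFact g (b :: a :: l.erase b) :=
    ((mk_mem_minTraces.1 ht).of_factEquiv hequiv).of_factEquiv
      ((hequiv.cons_erase_of_cons hab).cons b)
  exact (hmin.disjoint_of_commute hequiv.mul_comm_of_cons.symm).symm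

lemma image_cycleFactorsFinset_filter_subset {t : FactTrace n} (ht : t ∈ minTraces g) :
    {h ∈ Finset.Icc 1 g | h.cycleFactorsFinset ⊆ t.initialFactors}.image cycleFactorsFinset =
      t.initialFactors.powerset := by
  ext C
  simp only [Finset.mem_image, Finset.mem_filter, Finset.mem_Icc, one_le_perm, true_and,
    Finset.mem_powerset]
  constructor
  · rintro ⟨h, ⟨-, hsub⟩, rfl⟩
    exact hsub
  · intro hC
    have hdisjoint : (C : Set (Perm (Fin n))).Pairwise Perm.Disjoint := fun a ha b hb hab =>
      disjoint_of_mem_initialFactors ht (hC ha) (hC hb) hab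
    obtain ⟨h, rfl⟩ : ∃ h : Perm (Fin n), h.cycleFactorsFinset = C :=
      ⟨_, cycleFactorsFinset_eq_finset.2
        ⟨fun a ha => isCycle_of_mem_initialFactors ht (hC ha), hdisjoint, rfl⟩⟩
    obtain ⟨u, rfl⟩ := FactTrace.cycleFactorsFinset_subset_initialFactors_iff.1 hC
    exact ⟨h, ⟨(prepend_mem_minTraces_iff.1 ht).1, hC⟩, rfl⟩

/-- The signed number of minimal factorizations of a permutation up to equivalence. -/
noncomputable def signedCount (g : Perm (Fin n)) : ℤ := ∑ t ∈ minTraces g, (-1) ^ t.length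

lemma signedCount_inv_mul (hg : h ≤ g) :
    signedCount (h⁻¹ * g) = ∑ t ∈ minTraces g with h.cycleFactorsFinset ⊆ t.initialFactors,
      (-1) ^ t.length * (-1) ^ h.cycleFactorsFinset.card := by
  refine Finset.sum_nbij (FactTrace.prepend h.cycleFactorsFinset.toList) (fun t ht => ?_)
    (FactTrace.prepend_injective _).injOn (fun t ht => ?_) fun t _ => ?_
  · exact Finset.mem_filter.2 ⟨prepend_mem_minTraces_iff.2 ⟨hg, ht⟩,
      FactTrace.cycleFactorsFinset_subset_initialFactors_iff.2 ⟨t, rfl⟩⟩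
  · obtain ⟨ht, hsub⟩ := Finset.mem_filter.1 ht
    obtain ⟨u, rfl⟩ := FactTrace.cycleFactorsFinset_subset_initialFactors_iff.1 hsub
    exact ⟨u, (prepend_mem_minTraces_iff.1 ht).2, rfl⟩
  · rw [FactTrace.length_prepend, Finset.length_toList, pow_add, mul_right_comm, ← mul_pow,
      neg_one_mul, neg_neg, one_pow, one_mul]

lemma sum_Icc_signedCount_inv_mul (g : Perm (Fin n)) :
    ∑ h ∈ Finset.Icc 1 g, signedCount (h⁻¹ * g) = if g = 1 then 1 else 0 := by
  classical
  calc ∑ h ∈ Finset.Icc 1 g, signedCount (h⁻¹ * g)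
      = ∑ h ∈ Finset.Icc 1 g, ∑ t ∈ minTraces g with h.cycleFactorsFinset ⊆ t.initialFactors,
          (-1) ^ t.length * (-1) ^ h.cycleFactorsFinset.card :=
        Finset.sum_congr rfl fun h hh => signedCount_inv_mul (Finset.mem_Icc.1 hh).2
    _ = ∑ t ∈ minTraces g, ∑ h ∈ Finset.Icc 1 g with h.cycleFactorsFinset ⊆ t.initialFactors,
          (-1) ^ t.length * (-1) ^ h.cycleFactorsFinset.card :=
        Finset.sum_comm' fun h t => by
          simp only [Finset.mem_filter, and_assoc, and_comm (a := h.cycleFactorsFinset ⊆ _)]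
    _ = ∑ t ∈ minTraces g, (-1) ^ t.length * ∑ C ∈ t.initialFactors.powerset, (-1) ^ C.card := by
        refine Finset.sum_congr rfl fun t ht => ?_
        rw [← Finset.mul_sum, ← image_cycleFactorsFinset_filter_subset ht,
          Finset.sum_image cycleFactorsFinset_injective.injOn]
    _ = ∑ t ∈ minTraces g, if t = ⟦[]⟧ then 1 else 0 := by
        refine Finset.sum_congr rfl fun t _ => ?_
        simp only [Finset.sum_powerset_neg_one_pow_card, FactTrace.initialFactors_eq_empty_iff]
        split_ifs with ht
        · rw [ht]
          rfl
        · exact mul_zero _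
    _ = if g = 1 then 1 else 0 := by
        simp only [Finset.sum_ite_eq', mk_mem_minTraces, isMinFact_nil_iff]

theorem signedCount_eq_cycleProd_signedCatalan (g : Perm (Fin n)) :
    signedCount g = cycleProd signedCatalan g := by
  rw [← mu_one_eq_cycleProd_signedCatalan, mu_one_eq_of_sum_Icc_inv_mul
    le_and_le_iff_inv_mul_le_inv_mul sum_Icc_signedCount_inv_mul (one_le_perm g)]

end MinimalTraces

section Types

variable {α : Type*} [Fintype α] [DecidableEq α]

/-- The type of a factorization `l`: the number of factors in `l` of each length. -/
noncomputable def factType (l : List (Perm α)) : ℕ →₀ ℕ :=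
  Multiset.toFinsupp (l.map fun σ => σ.support.card : Multiset ℕ)

lemma factType_apply (l : List (Perm α)) (j : ℕ) :
    factType l j = l.countP fun σ => σ.support.card = j := by
  rw [factType, Multiset.toFinsupp_apply, Multiset.coe_count, List.count, List.countP_map]
  rfl

lemma factType_sum (l : List (Perm α)) (f : ℕ → ℕ) :
    ((factType l).sum fun j a => f j * a) = (l.map fun σ => f σ.support.card).sum := by
  have hcount := Finset.sum_multiset_map_count (l.map fun σ => σ.support.card : Multiset ℕ) f
  rw [Multiset.map_coe, Multiset.sum_coe, List.map_map] at hcount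
  refine Eq.trans ?_ hcount.symm
  simp only [Finsupp.sum, factType, Multiset.toFinsupp_support, Multiset.toFinsupp_apply,
    smul_eq_mul, mul_comm]

lemma factType_sum_apply (l : List (Perm α)) :
    ((factType l).sum fun _ a => a) = l.length := by
  simpa using factType_sum l 1

lemma factType_sum_sub_one_mul {l : List (Perm α)} (hl : ∀ σ ∈ l, σ.IsCycle) :
    ((factType l).sum fun j a => (j - 1) * a) = (l.map absLen).sum := by
  rw [factType_sum l (· - 1)]
  exact congrArg _ (List.map_congr_left fun σ hσ => (absLen_of_isCycle (hl σ hσ)).symm)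

variable {n : ℕ}

attribute [local instance] FactEquiv.setoid

/-- The type of a trace: the number of factors of each length. -/
noncomputable def FactTrace.type : FactTrace n → ℕ →₀ ℕ :=
  Quotient.lift factType fun _ _ h => by
    rw [factType, factType, Multiset.coe_eq_coe.2 (h.perm.map _)]

lemma FactTrace.type_sum_apply (t : FactTrace n) : (t.type.sum fun _ a => a) = t.length := by
  obtain ⟨l⟩ := t
  exact factType_sum_apply l

lemma type_apply_eq_zero {g : Perm (Fin n)} {t : FactTrace n} (ht : t ∈ minTraces g) {j : ℕ}
    (hj : j < 2) : t.type j = 0 := by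
  obtain ⟨l⟩ := t
  refine (factType_apply l j).trans (List.countP_eq_zero.2 fun σ hσ => ?_)
  have hσ := ((mk_mem_minTraces.1 ht).isCycle σ hσ).two_le_card_support
  rw [decide_eq_true_iff]
  lia

lemma type_sum_sub_one_mul {g : Perm (Fin n)} {t : FactTrace n} (ht : t ∈ minTraces g) :
    (t.type.sum fun j a => (j - 1) * a) = absLen g := by
  obtain ⟨l⟩ := t
  have hl := mk_mem_minTraces.1 ht
  exact (factType_sum_sub_one_mul hl.isCycle).trans hl.sum_absLen

lemma absLen_finRotate (n : ℕ) : absLen (finRotate (1 + n)) = n :=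
  cycleSum_finRotate (f := id) rfl n

lemma factOfType_iff {α : ℕ →₀ ℕ} {l : List (Perm (Fin (nOf α)))} :
    ((∀ σ ∈ l, σ.IsCycle ∧ 2 ≤ σ.support.card) ∧ l.prod = finRotate (nOf α) ∧
      ∀ j, l.countP (fun σ => decide (σ.support.card = j)) = α j) ↔
    IsMinFact (finRotate (nOf α)) l ∧ factType l = α := by
  simp only [← factType_apply, ← Finsupp.ext_iff]
  constructor
  · rintro ⟨hfactors, hprod, htype⟩
    have hcycle : ∀ σ ∈ l, σ.IsCycle := fun σ hσ => (hfactors σ hσ).1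
    refine ⟨⟨hcycle, hprod, ?_⟩, htype⟩
    rw [← factType_sum_sub_one_mul hcycle, htype]
    exact (absLen_finRotate _).symm
  · rintro ⟨hl, htype⟩
    exact ⟨fun σ hσ => ⟨hl.isCycle σ hσ, (hl.isCycle σ hσ).two_le_card_support⟩, hl.prod_eq, htype⟩

lemma Htilde_eq_card {α : ℕ →₀ ℕ} (hα : (α.sum fun j a => (j - 1) * a) = n) :
    Htilde α = #{t ∈ minTraces (finRotate (1 + n)) | t.type = α} := by
  subst hα
  let toTrace : Quot (fun l₁ l₂ : FactOfType α => FactEquiv l₁.1 l₂.1) →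
      {t // t ∈ ({t ∈ minTraces (finRotate (nOf α)) | t.type = α} : Finset _)} :=
    Quot.lift (fun l => ⟨⟦l.1⟧, Finset.mem_filter.2 <|
      (factOfType_iff.1 l.2).imp_left mk_mem_minTraces.2⟩)
      fun _ _ h => Subtype.ext (Quotient.sound h)
  have hbijective : toTrace.Bijective := by
    constructor
    · rintro ⟨l⟩ ⟨l'⟩ h
      exact Quot.sound (Quotient.exact (congrArg Subtype.val h))
    · rintro ⟨⟨l⟩, ht⟩
      have hl := (Finset.mem_filter.1 ht).imp_left mk_mem_minTraces.1
      exact ⟨Quot.mk _ ⟨l, factOfType_iff.2 hl⟩, rfl⟩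
  rw [Htilde, Nat.card_eq_of_bijective toTrace hbijective, Nat.card_eq_fintype_card,
    Fintype.card_coe]
  rfl

end Types

section Regrouping

variable {ι κ R : Type*} [DecidableEq κ] [Semiring R]

lemma finsum_mem_mul_card_fiber {T : Finset ι} {φ : ι → κ} {S : Set κ} (hφ : ∀ t ∈ T, φ t ∈ S)
    (f : κ → R) : ∑ᶠ a ∈ S, f a * #{t ∈ T | φ t = a} = ∑ t ∈ T, f (φ t) := by
  have hsubset : ↑(T.image φ) ⊆ S := by simpa [Set.subset_def] using hφ
  have hsupport : S ∩ Function.support (fun a => f a * (#{t ∈ T | φ t = a} : R)) ⊆ T.image φ := by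
    rintro a ⟨-, ha⟩
    have hcard : #{t ∈ T | φ t = a} ≠ 0 := fun h => ha (by simp only [h, Nat.cast_zero, mul_zero])
    obtain ⟨t, ht⟩ := Finset.card_ne_zero.1 hcard
    obtain ⟨htT, rfl⟩ := Finset.mem_filter.1 ht
    exact Finset.mem_image_of_mem φ htT
  rw [finsum_mem_eq_sum_of_subset _ hsupport hsubset,
    ← Finset.sum_fiberwise_of_maps_to fun _ => Finset.mem_image_of_mem φ]
  refine Finset.sum_congr rfl fun a _ => ?_
  rw [Finset.sum_congr rfl fun t ht => by rw [(Finset.mem_filter.1 ht).2], Finset.sum_const,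
    nsmul_eq_mul, Nat.cast_comm]

end Regrouping

/-- for `n ≥ 1`,
`∑_{α : ⟨α⟩ = n} (−1)^{|α| + n} H̃(α) = C_n`, the `n`-th Catalan number,
where `⟨α⟩ = ∑_{j≥2} (j−1) α j` and `|α| = ∑_{j≥2} α j`, the sum being over
all types `α` supported on `{j | 2 ≤ j}`. -/
theorem signed_sum_eq_catalan (n : ℕ) (hn : 1 ≤ n) :
    (∑ᶠ α ∈ {α : ℕ →₀ ℕ | (∀ j < 2, α j = 0) ∧ (α.sum fun j a => (j - 1) * a) = n},
        ((-1 : ℤ) ^ ((α.sum fun _ a => a) + n) * (Htilde α : ℤ))) =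
      (catalan n : ℤ) := by
  have htype (t) (ht : t ∈ minTraces (finRotate (1 + n))) :
      t.type ∈ {α : ℕ →₀ ℕ | (∀ j < 2, α j = 0) ∧ (α.sum fun j a => (j - 1) * a) = n} :=
    ⟨fun _ => type_apply_eq_zero ht, (type_sum_sub_one_mul ht).trans (absLen_finRotate n)⟩
  calc _ = ∑ᶠ α ∈ {α : ℕ →₀ ℕ | (∀ j < 2, α j = 0) ∧ (α.sum fun j a => (j - 1) * a) = n},
          (-1 : ℤ) ^ ((α.sum fun _ a => a) + n) *
            #{t ∈ minTraces (finRotate (1 + n)) | t.type = α} :=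
        finsum_mem_congr rfl fun α hα => by rw [Htilde_eq_card hα.2]
    _ = ∑ t ∈ minTraces (finRotate (1 + n)), (-1 : ℤ) ^ ((t.type.sum fun _ a => a) + n) :=
        finsum_mem_mul_card_fiber htype _
    _ = signedCount (finRotate (1 + n)) * (-1) ^ n := by
        simp only [FactTrace.type_sum_apply, pow_add, ← Finset.sum_mul, signedCount]
    _ = signedCatalan n * (-1) ^ n := by
        rw [signedCount_eq_cycleProd_signedCatalan, cycleProd_finRotate signedCatalan_zero]
    _ = catalan n := by
        rw [signedCatalan, mul_right_comm, ← mul_pow, neg_one_mul, neg_neg, one_pow, one_mul]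
end

section
/- Two increasing cycles σ and τ appearing in a minimal factorization of (1 2 … n) are 'noncrossing': there do not exist a < b < c < d in {1,…,n} with a, c in the support of σ and b, d in the support of τ (or vice versa). -/
/-!
Let `ℓ` be the reflection length on permutations, so that minimality says that `ℓ` is additive on
the factorization of the rotation `ζ = (1 2 … n)`, whose length is `n - 1`. Multiplying by a
transposition `(x y)` lowers `ℓ` if `x` and `y` lie in a common cycle and raises it otherwise.
Suppose that `a, c` lie in a cycle of one factor and `b, d` in a cycle of a later one. Since `ℓ` is
invariant under conjugation, `(a c)` and `(b d)` can be absorbed into these factors, so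
`ℓ ((b d) (a c) ζ) ≤ n - 3`. But if `a < b < c < d`, then `(a c) ζ` consists of two cycles which
separate `b` from `d`, so `(b d)` joins them again and `ℓ ((b d) (a c) ζ) = n - 1`.
-/

open Equiv Equiv.Perm

section ReflectionLength

variable {α : Type*}

/-- The space of rational functions on `α` that are constant along the cycles of `σ`. For
finite `α`, its dimension is the number of cycles of `σ`, fixed points included. -/
def fixedFunctions (σ : Perm α) : Submodule ℚ (α → ℚ) :=
  LinearMap.eqLocus (LinearMap.funLeft ℚ ℚ σ) LinearMap.id

theorem mem_fixedFunctions {σ : Perm α} {f : α → ℚ} :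
    f ∈ fixedFunctions σ ↔ ∀ x, f (σ x) = f x :=
  funext_iff

/-- The reflection length (or absolute length) of `σ`, encoded as the codimension of
`fixedFunctions σ` (`0` if that is infinite): subadditivity is then plain linear algebra. -/
noncomputable def reflectionLength (σ : Perm α) : ℕ :=
  Module.finrank ℚ ((α → ℚ) ⧸ fixedFunctions σ)

theorem reflectionLength_one : reflectionLength (1 : Perm α) = 0 := by
  have h : fixedFunctions (1 : Perm α) = ⊤ := eq_top_iff.2 fun _ _ => rfl
  rw [reflectionLength, h]
  exact Module.finrank_zero_of_subsingleton

theorem apply_eq_of_sameCycle {σ : Perm α} {f : α → ℚ} (hf : f ∈ fixedFunctions σ) {x y : α}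
    (h : σ.SameCycle x y) : f x = f y := by
  obtain ⟨k, rfl⟩ := h
  have hinv : ∀ z, f (σ⁻¹ z) = f z := fun z => by
    simpa using (mem_fixedFunctions.1 hf (σ⁻¹ z)).symm
  induction k with
  | zero => rfl
  | succ k ih => rw [add_comm, zpow_add, zpow_one, mul_apply, mem_fixedFunctions.1 hf, ← ih]
  | pred k ih => rw [sub_eq_neg_add, zpow_add, zpow_neg_one, mul_apply, hinv, ← ih]

section Finite

variable [Finite α]

theorem reflectionLength_add_finrank (σ : Perm α) :
    reflectionLength σ + Module.finrank ℚ (fixedFunctions σ) =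
      Module.finrank ℚ (α → ℚ) :=
  (fixedFunctions σ).finrank_quotient_add_finrank

theorem reflectionLength_mul_le (σ τ : Perm α) :
    reflectionLength (σ * τ) ≤ reflectionLength σ + reflectionLength τ := by
  have hinf : fixedFunctions σ ⊓ fixedFunctions τ ≤ fixedFunctions (σ * τ) := by
    rintro f ⟨hσ, hτ⟩
    exact mem_fixedFunctions.2 fun x =>
      (mem_fixedFunctions.1 hσ (τ x)).trans (mem_fixedFunctions.1 hτ x)
  have hdim := Submodule.finrank_sup_add_finrank_inf_eq (fixedFunctions σ) (fixedFunctions τ)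
  have hsup := Submodule.finrank_le (fixedFunctions σ ⊔ fixedFunctions τ)
  have hmono := Submodule.finrank_mono hinf
  have hσ := reflectionLength_add_finrank σ
  have hτ := reflectionLength_add_finrank τ
  have hστ := reflectionLength_add_finrank (σ * τ)
  omega

theorem reflectionLength_conj (σ τ : Perm α) :
    reflectionLength (σ * τ * σ⁻¹) = reflectionLength τ := by
  have hmap : (fixedFunctions τ).map (LinearEquiv.funCongrLeft ℚ ℚ σ⁻¹).toLinearMap =
      fixedFunctions (σ * τ * σ⁻¹) := by
    ext f
    rw [Submodule.mem_map_equiv, mem_fixedFunctions, mem_fixedFunctions]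
    refine σ.forall_congr_left.trans (forall_congr' fun x => ?_)
    change f (σ (τ (σ.symm x))) = f (σ (σ.symm x)) ↔ f (σ (τ (σ.symm x))) = f x
    rw [apply_symm_apply]
  have hτ := reflectionLength_add_finrank τ
  have hconj := reflectionLength_add_finrank (σ * τ * σ⁻¹)
  rw [← hmap, LinearEquiv.finrank_map_eq] at hconj
  omega

theorem reflectionLength_prod_le (l : List (Perm α)) :
    reflectionLength l.prod ≤ (l.map reflectionLength).sum := by
  induction l with
  | nil => exact reflectionLength_one.le
  | cons σ l ih =>
    rw [List.prod_cons, List.map_cons, List.sum_cons]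
    exact (reflectionLength_mul_le σ l.prod).trans (Nat.add_le_add_left ih _)

end Finite

section Fintype

variable [Fintype α]

theorem card_sub_one_le_reflectionLength {σ : Perm α} (hσ : ∀ x y, σ.SameCycle x y) :
    Fintype.card α - 1 ≤ reflectionLength σ := by
  have hconst : fixedFunctions σ ≤ ℚ ∙ (1 : α → ℚ) := by
    intro f hf
    rcases isEmpty_or_nonempty α with _ | ⟨⟨x⟩⟩
    · exact Subsingleton.elim f 0 ▸ Submodule.zero_mem _
    · refine Submodule.mem_span_singleton.2 ⟨f x, funext fun y => ?_⟩
      simpa using apply_eq_of_sameCycle hf (hσ x y)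
  have hone := (Submodule.finrank_mono hconst).trans (finrank_span_le_card {(1 : α → ℚ)})
  rw [Set.toFinset_singleton, Finset.card_singleton] at hone
  have hdim := reflectionLength_add_finrank σ
  rw [Module.finrank_fintype_fun_eq_card] at hdim
  omega

variable [DecidableEq α]

theorem reflectionLength_le_card_support_sub_one (σ : Perm α) :
    reflectionLength σ ≤ σ.support.card - 1 := by
  rcases σ.support.eq_empty_or_nonempty with hσ | ⟨x, hx⟩
  · simp [support_eq_empty_iff.1 hσ, reflectionLength_one]
  let L : (α → ℚ) →ₗ[ℚ] (σ.support.erase x → ℚ) :=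
    LinearMap.funLeft ℚ ℚ (↑) - LinearMap.funLeft ℚ ℚ fun _ => x
  have hker : LinearMap.ker L ≤ fixedFunctions σ := by
    intro f hf
    have hconst : ∀ z ∈ σ.support, f z = f x := fun z hz => by
      rcases eq_or_ne z x with rfl | hzx
      · rfl
      · exact sub_eq_zero.1 (congrFun hf ⟨z, Finset.mem_erase.2 ⟨hzx, hz⟩⟩)
    refine mem_fixedFunctions.2 fun y => ?_
    by_cases hy : y ∈ σ.support
    · rw [hconst y hy, hconst _ (apply_mem_support.2 hy)]
    · rw [notMem_support.1 hy]
  have hmono := Submodule.finrank_mono hker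
  have hrange := Submodule.finrank_le (LinearMap.range L)
  have hdim := L.finrank_range_add_finrank_ker
  have hσ := reflectionLength_add_finrank σ
  rw [Module.finrank_fintype_fun_eq_card, Fintype.card_coe, Finset.card_erase_of_mem hx] at hrange
  omega

theorem reflectionLength_le_card_support_sub_card_cycleType (σ : Perm α) :
    reflectionLength σ ≤ σ.support.card - σ.cycleType.card := by
  suffices h : reflectionLength σ + σ.cycleType.card ≤ σ.support.card by omega
  induction σ using cycle_induction_on with
  | base_one => simp [reflectionLength_one]
  | base_cycles σ hσ =>
    have hlen := reflectionLength_le_card_support_sub_one σ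
    have hcard := hσ.two_le_card_support
    rw [hσ.cycleType, Multiset.card_singleton]
    omega
  | induction_disjoint σ τ hdisj _ ihσ ihτ =>
    have hmul := reflectionLength_mul_le σ τ
    rw [hdisj.cycleType_mul, Multiset.card_add, hdisj.card_support_mul]
    omega

end Fintype

theorem reflectionLength_swap_le_one [Finite α] [DecidableEq α] (a b : α) :
    reflectionLength (swap a b) ≤ 1 := by
  have := Fintype.ofFinite α
  rcases eq_or_ne a b with rfl | hab
  · rw [swap_self]
    exact reflectionLength_one.le.trans zero_le_one
  · simpa [card_support_swap hab] using reflectionLength_le_card_support_sub_one (swap a b)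

end ReflectionLength

section SwapMul

variable {α : Type*}

theorem not_sameCycle_of_pow_apply_eq_self [Finite α] {σ : Perm α} {a b : α} {k : ℕ} (hk : 0 < k)
    (hper : (σ ^ k) a = a) (hne : ∀ i < k, (σ ^ i) a ≠ b) : ¬ σ.SameCycle a b := by
  intro h
  obtain ⟨m, hm⟩ := h.exists_nat_pow_eq
  apply hne (m % k) (Nat.mod_lt m hk)
  rw [← iterate_eq_pow] at hper hm ⊢
  exact (Function.IsPeriodicPt.iterate_mod_apply hper m).trans hm

variable [DecidableEq α]

theorem swap_mul_pow_apply {σ : Perm α} {a b : α} {k : ℕ}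
    (h : ∀ i, 0 < i → i ≤ k → (σ ^ i) a ≠ a ∧ (σ ^ i) a ≠ b) :
    ((swap a b * σ) ^ k) a = (σ ^ k) a := by
  induction k with
  | zero => rfl
  | succ k ih =>
    obtain ⟨ha, hb⟩ := h (k + 1) k.succ_pos le_rfl
    rw [pow_succ' σ, mul_apply] at ha hb
    rw [pow_succ', mul_apply, ih fun i hi hik => h i hi (by omega), pow_succ' σ, mul_apply,
      mul_apply, swap_apply_of_ne_of_ne ha hb]

theorem sameCycle_swap_mul_iff [Finite α] {σ : Perm α} {a b : α} (hab : a ≠ b) :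
    (swap a b * σ).SameCycle a b ↔ ¬ σ.SameCycle a b := by
  -- The two permutations move `a` in the same way until `σ` first returns to `{a, b}`;
  -- at that time one of them is at `a` and the other at `b`.
  have hreturn : ∃ k, 0 < k ∧ ((σ ^ k) a = a ∨ (σ ^ k) a = b) :=
    ⟨orderOf σ, orderOf_pos σ, Or.inl (by rw [pow_orderOf_eq_one, one_apply])⟩
  classical
  obtain ⟨k, ⟨hk, hend⟩, hfirst⟩ : ∃ k, (0 < k ∧ ((σ ^ k) a = a ∨ (σ ^ k) a = b)) ∧
      ∀ i, 0 < i → i < k → (σ ^ i) a ≠ a ∧ (σ ^ i) a ≠ b :=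
    ⟨Nat.find hreturn, Nat.find_spec hreturn, fun i hi hik =>
      not_or.1 fun h => Nat.find_min hreturn hik ⟨hi, h⟩⟩
  have hagree : ∀ i < k, ((swap a b * σ) ^ i) a = (σ ^ i) a := fun i hik =>
    swap_mul_pow_apply fun j hj hji => hfirst j hj (hji.trans_lt hik)
  have hswap : ((swap a b * σ) ^ k) a = swap a b ((σ ^ k) a) := by
    obtain ⟨m, rfl⟩ := Nat.exists_eq_succ_of_ne_zero hk.ne'
    rw [Nat.succ_eq_add_one, pow_succ', mul_apply, hagree m m.lt_succ_self, mul_apply,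
      pow_succ' σ, mul_apply]
  have havoid : ∀ i < k, (σ ^ i) a ≠ b := fun i hik => by
    rcases i.eq_zero_or_pos with rfl | hi
    · exact hab
    · exact (hfirst i hi hik).2
  rcases hend with ha | hb
  · rw [ha, swap_apply_left] at hswap
    exact iff_of_true ⟨k, hswap⟩ (not_sameCycle_of_pow_apply_eq_self hk ha havoid)
  · rw [hb, swap_apply_right] at hswap
    refine iff_of_false (not_sameCycle_of_pow_apply_eq_self hk hswap fun i hik => ?_)
      (not_not.2 ⟨k, hb⟩)
    exact hagree i hik ▸ havoid i hik

variable [Finite α] {σ : Perm α} {a b : α}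

theorem reflectionLength_swap_mul_lt (hab : a ≠ b) (h : σ.SameCycle a b) :
    reflectionLength (swap a b * σ) < reflectionLength σ := by
  have hle : fixedFunctions σ ≤ fixedFunctions (swap a b * σ) := by
    intro f hf
    have hfab := apply_eq_of_sameCycle hf h
    have hswap : ∀ y, f (swap a b y) = f y := fun y => by
      rw [swap_apply_def]
      split_ifs with ha hb
      · rw [ha, hfab]
      · rw [hb, hfab]
      · rfl
    exact mem_fixedFunctions.2 fun x => (hswap (σ x)).trans (mem_fixedFunctions.1 hf x)
  have hne : fixedFunctions σ ≠ fixedFunctions (swap a b * σ) := by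
    classical
    let f : α → ℚ := fun x => if (swap a b * σ).SameCycle a x then 1 else 0
    have hf : f ∈ fixedFunctions (swap a b * σ) :=
      mem_fixedFunctions.2 fun x => by simp only [f, sameCycle_apply_right]
    intro heq
    have hfab : f a = f b := apply_eq_of_sameCycle (heq ▸ hf) h
    have hsplit : ¬ (swap a b * σ).SameCycle a b :=
      fun hsame => (sameCycle_swap_mul_iff hab).1 hsame h
    simp [f, hsplit, SameCycle.refl] at hfab
  have hlt := Submodule.finrank_lt_finrank_of_lt (hle.lt_of_ne hne)
  have hσ := reflectionLength_add_finrank σ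
  have hswap := reflectionLength_add_finrank (swap a b * σ)
  omega

theorem lt_reflectionLength_swap_mul (h : ¬ σ.SameCycle a b) :
    reflectionLength σ < reflectionLength (swap a b * σ) := by
  have hab : a ≠ b := fun hab => h (hab ▸ SameCycle.refl σ a)
  simpa only [swap_mul_self_mul] using
    reflectionLength_swap_mul_lt hab ((sameCycle_swap_mul_iff hab).2 h)

theorem reflectionLength_le_swap_mul_add_one (σ : Perm α) (a b : α) :
    reflectionLength σ ≤ reflectionLength (swap a b * σ) + 1 := by
  have hmul := reflectionLength_mul_le (swap a b) (swap a b * σ)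
  rw [swap_mul_self_mul] at hmul
  have hswap := reflectionLength_swap_le_one a b
  omega

end SwapMul

section Factorization

variable {α : Type*} [Finite α] [DecidableEq α] {σ τ : Perm α} {a b c d : α}

theorem reflectionLength_swap_mul_prod_lt {l : List (Perm α)} (hσ : σ ∈ l) (hab : a ≠ b)
    (h : σ.SameCycle a b) :
    reflectionLength (swap a b * l.prod) < (l.map reflectionLength).sum := by
  obtain ⟨l₁, l₂, rfl⟩ := List.append_of_mem hσ
  have hfactor : swap a b * (l₁ ++ σ :: l₂).prod =
      swap a b * l₁.prod * (swap a b)⁻¹ * (swap a b * σ * l₂.prod) := by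
    rw [List.prod_append, List.prod_cons]
    group
  have hmul := reflectionLength_mul_le (swap a b * l₁.prod * (swap a b)⁻¹)
    (swap a b * σ * l₂.prod)
  rw [← hfactor, reflectionLength_conj] at hmul
  have hmul' := reflectionLength_mul_le (swap a b * σ) l₂.prod
  have hlt := reflectionLength_swap_mul_lt hab h
  have h₁ := reflectionLength_prod_le l₁
  have h₂ := reflectionLength_prod_le l₂
  rw [List.map_append, List.map_cons, List.sum_append, List.sum_cons]
  omega

theorem reflectionLength_swap_mul_swap_mul_prod_append_add_two_le {l₁ l₂ : List (Perm α)}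
    (hσ : σ ∈ l₁) (hτ : τ ∈ l₂) (hab : a ≠ b) (hcd : c ≠ d) (hσab : σ.SameCycle a b)
    (hτcd : τ.SameCycle c d) :
    reflectionLength (swap c d * (swap a b * (l₁ ++ l₂).prod)) + 2 ≤
      ((l₁ ++ l₂).map reflectionLength).sum := by
  have hfactor : swap c d * (swap a b * (l₁ ++ l₂).prod) =
      swap c d * (swap a b * l₁.prod) * (swap c d)⁻¹ * (swap c d * l₂.prod) := by
    rw [List.prod_append]
    group
  have hmul := reflectionLength_mul_le (swap c d * (swap a b * l₁.prod) * (swap c d)⁻¹)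
    (swap c d * l₂.prod)
  rw [← hfactor, reflectionLength_conj] at hmul
  have h₁ := reflectionLength_swap_mul_prod_lt hσ hab hσab
  have h₂ := reflectionLength_swap_mul_prod_lt hτ hcd hτcd
  rw [List.map_append, List.sum_append]
  omega

theorem sameCycle_swap_mul_prod_of_minimal {l : List (Perm α)}
    (hmin : (l.map reflectionLength).sum ≤ reflectionLength l.prod) {i j : Fin l.length}
    (hij : i < j) (hab : a ≠ b) (hi : (l.get i).SameCycle a b) (hj : (l.get j).SameCycle c d) :
    (swap a b * l.prod).SameCycle c d := by
  by_contra hnot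
  have hcd : c ≠ d := fun hcd => hnot (hcd ▸ SameCycle.refl _ c)
  have hi_mem : l.get i ∈ l.take j :=
    List.mem_take_iff_getElem.2 ⟨i, lt_min hij i.isLt, rfl⟩
  have hj_mem : l.get j ∈ l.drop j :=
    List.mem_drop_iff_getElem.2 ⟨0, by simp, rfl⟩
  have hupper := reflectionLength_swap_mul_swap_mul_prod_append_add_two_le hi_mem hj_mem hab hcd
    hi hj
  rw [List.take_append_drop] at hupper
  have hsplit := reflectionLength_le_swap_mul_add_one l.prod a b
  have hmerge := lt_reflectionLength_swap_mul hnot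
  omega

end Factorization

section FinRotate

theorem mem_of_sameCycle_of_mapsTo {α : Type*} [Finite α] {σ : Perm α} {s : Set α}
    (hs : Set.MapsTo σ s s) {x y : α} (h : σ.SameCycle x y) (hx : x ∈ s) : y ∈ s := by
  obtain ⟨k, rfl⟩ := h.exists_nat_pow_eq
  rw [← iterate_eq_pow]
  exact hs.iterate k hx

variable {n : ℕ}

theorem sameCycle_finRotate (x y : Fin n) : (finRotate n).SameCycle x y := by
  rcases lt_or_ge n 2 with hn | hn
  · have : Subsingleton (Fin n) := Fin.subsingleton_iff_le_one.2 (by omega)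
    exact Subsingleton.elim x y ▸ SameCycle.refl _ x
  · have hmoved : ∀ z, finRotate n z ≠ z := fun z =>
      mem_support.1 (support_finRotate_of_le hn ▸ Finset.mem_univ z)
    exact (isCycle_finRotate_of_le hn).sameCycle (hmoved x) (hmoved y)

theorem mapsTo_swap_mul_finRotate_Ico {a c : Fin n} (hac : a < c) :
    Set.MapsTo (swap a c * finRotate n) (Set.Ico a c) (Set.Ico a c) := by
  obtain _ | n := n
  · exact a.elim0
  intro x ⟨hax, hxc⟩
  have hrot : ((finRotate (n + 1) x : Fin (n + 1)) : ℕ) = x + 1 :=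
    coe_finRotate_of_ne_last (hxc.trans_le c.le_last).ne
  rw [mul_apply, swap_apply_def, Set.mem_Ico]
  split_ifs <;> grind

theorem not_sameCycle_swap_mul_finRotate {a c x y : Fin n} (hx : x ∈ Set.Ico a c)
    (hy : y ∉ Set.Ico a c) : ¬ (swap a c * finRotate n).SameCycle x y := fun h =>
  hy (mem_of_sameCycle_of_mapsTo
    (mapsTo_swap_mul_finRotate_Ico (hx.1.trans_lt hx.2)) h hx)

end FinRotate

theorem factors_noncrossing_general (n : ℕ) (l : List (Perm (Fin n)))
    (hprod : l.prod = finRotate n)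
    (hmin : (l.map fun σ => σ.support.card - σ.cycleType.card).sum ≤ n - 1) :
    ∀ i j : Fin l.length, i ≠ j →
      ¬ ∃ a b c d : Fin n, a < b ∧ b < c ∧ c < d ∧
        (l.get i).SameCycle a c ∧ (l.get j).SameCycle b d := by
  rintro i j hij ⟨a, b, c, d, hab, hbc, hcd, hi, hj⟩
  have hlen : (l.map reflectionLength).sum ≤ reflectionLength l.prod :=
    calc (l.map reflectionLength).sum
      _ ≤ (l.map fun σ => σ.support.card - σ.cycleType.card).sum :=
        List.sum_le_sum fun σ _ => reflectionLength_le_card_support_sub_card_cycleType σ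
      _ ≤ Fintype.card (Fin n) - 1 := by rwa [Fintype.card_fin]
      _ ≤ reflectionLength l.prod :=
        hprod ▸ card_sub_one_le_reflectionLength sameCycle_finRotate
  have hac := hab.trans hbc
  have hbd := hbc.trans hcd
  rcases hij.lt_or_gt with hlt | hgt
  · have h := sameCycle_swap_mul_prod_of_minimal hlen hlt hac.ne hi hj
    exact not_sameCycle_swap_mul_finRotate ⟨hab.le, hbc⟩ (fun hd => hd.2.not_gt hcd) (hprod ▸ h)
  · have h := sameCycle_swap_mul_prod_of_minimal hlen hgt hbd.ne hj hi
    exact not_sameCycle_swap_mul_finRotate ⟨hbc.le, hcd⟩ (fun ha => ha.1.not_gt hab)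
      (hprod ▸ h).symm

/-- two factors of a minimal factorization of the `n`-cycle
`(1 2 … n)` (realized as `finRotate n`) are noncrossing: there are no
`a < b < c < d` with `a, c` in the support of one and `b, d` in the support
of the other. -/
theorem factors_noncrossing (n : ℕ)
    (l : List (Equiv.Perm (Fin n)))
    (hcyc : ∀ σ ∈ l, σ.IsCycle ∧ 2 ≤ σ.support.card)
    (hprod : l.prod = finRotate n)
    (hmin : (l.map fun σ => σ.support.card - 1).sum = n - 1) :
    ∀ i j : Fin l.length, i ≠ j →
      ¬ ∃ a b c d : Fin n, a < b ∧ b < c ∧ c < d ∧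
        ((a ∈ (l.get i).support ∧ c ∈ (l.get i).support ∧
          b ∈ (l.get j).support ∧ d ∈ (l.get j).support) ∨
         (a ∈ (l.get j).support ∧ c ∈ (l.get j).support ∧
          b ∈ (l.get i).support ∧ d ∈ (l.get i).support)) := by
  have hlen : (l.map fun σ => σ.support.card - σ.cycleType.card).sum ≤ n - 1 := by
    rw [← hmin, List.map_congr_left fun σ hσ => by
      rw [(hcyc σ hσ).1.cycleType, Multiset.card_singleton]]
  have hsame : ∀ k x y, x ∈ (l.get k).support → y ∈ (l.get k).support →
      (l.get k).SameCycle x y := fun k x y hx hy =>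
    (hcyc _ (l.get_mem k)).1.sameCycle (mem_support.1 hx) (mem_support.1 hy)
  rintro i j hij ⟨a, b, c, d, hab, hbc, hcd, ⟨ha, hc, hb, hd⟩ | ⟨ha, hc, hb, hd⟩⟩
  · exact factors_noncrossing_general n l hprod hlen i j hij
      ⟨a, b, c, d, hab, hbc, hcd, hsame i a c ha hc, hsame j b d hb hd⟩
  · exact factors_noncrossing_general n l hprod hlen j i hij.symm
      ⟨a, b, c, d, hab, hbc, hcd, hsame j a c ha hc, hsame i b d hb hd⟩
end
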